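/- Assume all parameters equal: t_α = t for every α ∈ R₀, with t ∈ (−1,1), and for μ ∈ P_c^{∨,+} := {μ ∈ P∨ : 0 ≤ ⟨μ,α⟩ ≤ c ∀α ∈ R₀⁺} let ξ_μ(t) denote the unique global minimum of 𝒱_μ with parameter t. Then t ↦ ξ_μ(t) is continuous (indeed real-analytic) on (−1,1), and lim_{t→0} ξ_μ(t) = (2π/(c + h(R₀))) (ρ∨ + μ), where h(R₀) := ⟨ρ,ϑ∨⟩ + 1 is the Coxeter number (ρ the half-sum of positive roots, ϑ the highest short root), while lim_{t→1⁻} ξ_μ(t) = 2π c⁻¹ μ. -/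

import Mathlib

open scoped RealInnerProductSpace BigOperators Classical

noncomputable section

/-- Alternating composition `A ∘ B ∘ A ∘ ⋯` with `m` factors (starting with `A`). -/
def altComp {α : Type*} (A B : α → α) : ℕ → (α → α)
  | 0 => id
  | m + 1 => A ∘ altComp B A m

/-- The sign of a real number, as an integer (with `sgnZ 0 = 0`). -/
def sgnZ (x : ℝ) : ℤ := if 0 < x then 1 else if x < 0 then -1 else 0

/-- The function `v(x) = (1-t²)∫₀ˣ dy/(1-2t cos y+t²)`. -/
def mvfun (t x : ℝ) : ℝ :=
  (1 - t ^ 2) * ∫ y in (0:ℝ)..x, 1 / (1 - 2 * t * Real.cos y + t ^ 2)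

section AffineOps

variable {V : Type*} [NormedAddCommGroup V] [InnerProductSpace ℝ V]

/-- The coroot `α∨ = 2α/⟨α,α⟩`. -/
def coroot (α : V) : V := (2 / ⟪α, α⟫) • α

/-- The affine root `a = α∨ + r c` (encoded as the pair `(α, r)`), as an affine
function on `V`. -/
def aval (c : ℝ) (a : V × ℤ) (x : V) : ℝ := ⟪x, coroot a.1⟫ + a.2 * c

/-- The affine reflection `s_a(x) = x - a(x) α` attached to `a = α∨ + r c`. -/
def sAff (c : ℝ) (a : V × ℤ) (x : V) : V := x - aval c a x • a.1

/-- `w` maps the affine root `a` to the affine root `b`, i.e. `(wa)(x) = a(w⁻¹x) = b(x)`. -/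
def mapsRoot (c : ℝ) (w : Equiv.Perm V) (a b : V × ℤ) : Prop :=
  ∀ x : V, aval c a (w⁻¹ x) = aval c b x

/-- The linear part `w′` of an affine transformation `w`. -/
def linPart (w : Equiv.Perm V) (x : V) : V := w x - w 0

variable {R : Type*} [Field R]

/-- The difference-reflection operator `T̂_a`. -/
def hatT (c : ℝ) (τ : V × ℤ → R) (a : V × ℤ) (f : V → R) (x : V) : R :=
  if 0 < aval c a x then τ a * f (sAff c a x)
  else if aval c a x = 0 then τ a * f x
  else (τ a)⁻¹ * f (sAff c a x) + (τ a - (τ a)⁻¹) * f x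

/-- The discrete integral operator `J_a`. -/
def Jop (c : ℝ) (a : V × ℤ) (f : V → R) (x : V) : R :=
  if 0 < aval c a x then
    - ∑ k ∈ Finset.Icc (1 : ℤ) ⌊aval c a x⌋, f (x - k • a.1)
  else if aval c a x = 0 then 0
  else ∑ k ∈ Finset.Ico (0 : ℤ) (-⌊aval c a x⌋), f (x + k • a.1)

/-- The integral-reflection operator `I_a = τ_a s_a + (τ_a - τ_a⁻¹) J_a`. -/
def Iop (c : ℝ) (τ : V × ℤ → R) (a : V × ℤ) (f : V → R) (x : V) : R :=
  τ a * f (sAff c a x) + (τ a - (τ a)⁻¹) * Jop c a f x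

end AffineOps

/-- An irreducible reduced crystallographic root system spanning `V`, together with a
choice of positive roots, simple roots, and the highest short root. -/
structure RootSystemData (V : Type*) [NormedAddCommGroup V] [InnerProductSpace ℝ V] :
    Type _ where
  n : ℕ
  n_pos : 1 ≤ n
  rank_eq : Module.finrank ℝ V = n
  R0 : Finset V
  ne_zero : ∀ α ∈ R0, α ≠ (0 : V)
  span_top : Submodule.span ℝ (R0 : Set V) = ⊤
  reduced : ∀ α ∈ R0, ∀ t : ℝ, t • α ∈ R0 → t = 1 ∨ t = -1
  crystallographic : ∀ α ∈ R0, ∀ β ∈ R0, ∃ k : ℤ, ⟪β, coroot α⟫ = (k : ℝ)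
  reflect_mem : ∀ α ∈ R0, ∀ β ∈ R0, β - ⟪β, coroot α⟫ • α ∈ R0
  irreducible : ∀ S : Finset V, S ⊆ R0 →
      (∀ a ∈ S, ∀ b ∈ R0, b ∉ S → ⟪a, b⟫ = 0) → S = ∅ ∨ S = R0
  pos : Finset V
  pos_subset : pos ⊆ R0
  pos_or_neg : ∀ α ∈ R0, α ∈ pos ∨ -α ∈ pos
  pos_not_both : ∀ α ∈ pos, -α ∉ pos
  pos_add : ∀ α ∈ pos, ∀ β ∈ pos, α + β ∈ R0 → α + β ∈ pos
  simpleRoot : Fin n → V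
  simpleRoot_mem : ∀ j, simpleRoot j ∈ pos
  pos_natCombo : ∀ α ∈ pos, ∃ k : Fin n → ℕ, α = ∑ j, (k j : ℝ) • simpleRoot j
  hshort : V
  hshort_mem : hshort ∈ pos
  hshort_short : ∀ α ∈ R0, ‖hshort‖ ≤ ‖α‖
  hshort_highest : ∀ α ∈ R0, ‖α‖ = ‖hshort‖ →
      ∃ k : Fin n → ℕ, hshort - α = ∑ j, (k j : ℝ) • simpleRoot j

namespace RootSystemData

variable {V : Type*} [NormedAddCommGroup V] [InnerProductSpace ℝ V]
variable (D : RootSystemData V)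

/-- The weight lattice `P`. -/
def weightLattice : Set V :=
  {x : V | ∀ α ∈ D.R0, ∃ k : ℤ, ⟪x, coroot α⟫ = (k : ℝ)}

/-- The root lattice `Q`. -/
def rootLattice : Set V := (Submodule.span ℤ (D.R0 : Set V) : Set V)

/-- The coweight lattice `P∨`. -/
def coweightLattice : Set V :=
  {x : V | ∀ α ∈ D.R0, ∃ k : ℤ, ⟪x, α⟫ = (k : ℝ)}

/-- The dominant cone. -/
def dominant : Set V := {x : V | ∀ α ∈ D.pos, 0 ≤ ⟪x, coroot α⟫}

/-- `ω` is a minuscule (dominant) weight. -/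
def IsMinuscule (ω : V) : Prop :=
  ω ∈ D.weightLattice ∧ ω ∈ D.dominant ∧ ω ≠ 0 ∧
    ∀ α ∈ D.pos, ⟪ω, coroot α⟫ ≤ 1

/-- `ω` is the quasi-minuscule weight, i.e. the highest short root. -/
def IsQuasiMinuscule (ω : V) : Prop := ω = D.hshort

/-- The saturated set `P_ϑ` containing the (quasi-)minuscule weights. -/
def Ptheta : Set V :=
  {ν : V | ν ∈ D.weightLattice ∧ ∀ α ∈ D.R0, α ≠ ν → |⟪ν, coroot α⟫| ≤ 1}

/-- Half sum of the positive roots. -/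
def rhoHalf : V := (2⁻¹ : ℝ) • ∑ α ∈ D.pos, α

/-- Half sum of the positive coroots. -/
def rhoVee : V := (2⁻¹ : ℝ) • ∑ α ∈ D.pos, coroot α

/-- `(α, r)` encodes an affine root. -/
def IsAffRoot (a : V × ℤ) : Prop := a.1 ∈ D.R0

/-- `(α, r)` encodes a positive affine root. -/
def IsAffPos (a : V × ℤ) : Prop :=
  a.1 ∈ D.R0 ∧ (1 ≤ a.2 ∨ (a.2 = 0 ∧ a.1 ∈ D.pos))

/-- `(α, r)` encodes a negative affine root. -/
def IsAffNeg (a : V × ℤ) : Prop := D.IsAffPos (-a.1, -a.2)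

/-- The simple affine roots `a₀ = -ϑ∨ + c`, `a_j = α_j∨`. -/
def aSimple (j : Fin (D.n + 1)) : V × ℤ :=
  Fin.cons (α := fun _ => V × ℤ) (-D.hshort, (1 : ℤ))
    (fun i => (D.simpleRoot i, (0 : ℤ))) j

/-- The reflections generating the finite Weyl group `W₀`. -/
def W0Gens : Set (Equiv.Perm V) :=
  {e | ∃ α ∈ D.R0, ∀ x, e x = x - ⟪x, coroot α⟫ • α}

/-- The finite Weyl group `W₀`. -/
def W0 : Subgroup (Equiv.Perm V) := Subgroup.closure D.W0Gens

variable (c : ℝ)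

/-- The affine reflections generating the affine Weyl group `W_R`. -/
def AffGens : Set (Equiv.Perm V) :=
  {e | ∃ a : V × ℤ, D.IsAffRoot a ∧ ∀ x, e x = sAff c a x}

/-- The affine Weyl group `W_R`. -/
def WR : Subgroup (Equiv.Perm V) := Subgroup.closure (D.AffGens c)

/-- The translations `t_{cλ}`, `λ ∈ P`. -/
def TransGens : Set (Equiv.Perm V) :=
  {e | ∃ lam ∈ D.weightLattice, ∀ x : V, e x = x + c • lam}

/-- The extended affine Weyl group `W = W₀ ⋉ t(cP)`. -/
def Wext : Subgroup (Equiv.Perm V) :=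
  Subgroup.closure (D.AffGens c ∪ D.TransGens c)

/-- The set `R(w) = R⁺ ∩ w⁻¹(R⁻)`. -/
def RW (w : Equiv.Perm V) : Set (V × ℤ) :=
  {a | D.IsAffPos a ∧ ∃ b : V × ℤ, D.IsAffNeg b ∧ mapsRoot c w a b}

/-- The length `ℓ(w) = #R(w)`. -/
def len (w : Equiv.Perm V) : ℕ := (D.RW c w).ncard

/-- The closed fundamental alcove `A_c`. -/
def alcove : Set V := {x | ∀ a : V × ℤ, D.IsAffPos a → 0 ≤ aval c a x}

/-- `wmin x` is the unique shortest element of the affine Weyl group mapping `x` into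
the fundamental alcove. -/
def IsWmin (wmin : V → Equiv.Perm V) : Prop :=
  ∀ x : V, wmin x ∈ D.WR c ∧ (wmin x) x ∈ D.alcove c ∧
    ∀ w ∈ D.WR c, w x ∈ D.alcove c → D.len c (wmin x) < D.len c w ∨ w = wmin x

/-- One step in the Bruhat order: `w < w s_a` whenever `ℓ(w) < ℓ(w s_a)`. -/
def bruhatStep (w w' : Equiv.Perm V) : Prop :=
  ∃ a : V × ℤ, D.IsAffPos a ∧ ∃ e : Equiv.Perm V,
    (∀ x, e x = sAff c a x) ∧ w' = w * e ∧ D.len c w < D.len c w'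

/-- The Bruhat order on the affine Weyl group. -/
def bruhatLE (w w' : Equiv.Perm V) : Prop :=
  Relation.ReflTransGen (D.bruhatStep c) w w'

/-- The partial order on `V`: `x ≤ y` iff `x₊ = y₊` and `w_x ≤ w_y` (Bruhat). -/
def vle (wmin : V → Equiv.Perm V) (x y : V) : Prop :=
  (wmin x) x = (wmin y) y ∧ D.bruhatLE c (wmin x) (wmin y)

/-- The interval `[x, y]` for the order `vle`. -/
def vInterval (wmin : V → Equiv.Perm V) (x y : V) : Set V :=
  {z : V | D.vle c wmin x z ∧ D.vle c wmin z y}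

/-- The partial order `⪯` on the weight lattice:
`μ ⪯ λ` iff `λ - μ ∈ Q` and `Conv [μ₊, μ] ⊆ Conv [λ₊, λ]`. -/
def pleq (wmin : V → Equiv.Perm V) (μ lam : V) : Prop :=
  lam - μ ∈ D.rootLattice ∧
    convexHull ℝ (D.vInterval c wmin ((wmin μ) μ) μ)
      ⊆ convexHull ℝ (D.vInterval c wmin ((wmin lam) lam) lam)

section Ops

variable {R : Type*} [Field R]

/-- `τ` is a multiplicity function: nonvanishing on affine roots, and invariant
under the (extended affine) Weyl group action on the affine roots. -/
def IsMultiplicity (τ : V × ℤ → R) : Prop :=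
  (∀ a : V × ℤ, D.IsAffRoot a → τ a ≠ 0) ∧
    ∀ w ∈ D.Wext c, ∀ a b : V × ℤ, D.IsAffRoot a → D.IsAffRoot b →
      mapsRoot c w a b → τ a = τ b

/-- `τ_w = ∏_{a ∈ R(w)} τ_a`. -/
def tauw (τ : V × ℤ → R) (w : Equiv.Perm V) : R := ∏ᶠ a ∈ D.RW c w, τ a

/-- `τ₀`, the multiplicity of the affine simple root `a₀`. -/
def tauZero (τ : V × ℤ → R) : R := τ (-D.hshort, (1 : ℤ))

/-- The operator `I_{j₁} ∘ ⋯ ∘ I_{jℓ}` attached to a word in the simple reflections. -/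
def wordOp (τ : V × ℤ → R) (l : List (Fin (D.n + 1))) : (V → R) → V → R :=
  (l.map fun j => Iop c τ (D.aSimple j)).foldr (· ∘ ·) id

/-- `l` is a reduced word for `w`, i.e. `w = s_{j₁} ∘ ⋯ ∘ s_{jℓ}` with `ℓ = ℓ(w)`. -/
def IsReducedWord (w : Equiv.Perm V) (l : List (Fin (D.n + 1))) : Prop :=
  l.length = D.len c w ∧
    ∀ x : V, w x = ((l.map fun j => sAff c (D.aSimple j)).foldr (· ∘ ·) id) x

/-- `e∨_τ(η) = ∏_{α ∈ R₀⁺} τ_{α∨}^{⟨η,α∨⟩}`. -/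
def etau (τ : V × ℤ → R) (η : V) : R :=
  ∏ α ∈ D.pos, τ (α, (0 : ℤ)) ^ ⌊⟪η, coroot α⟫⌋

/-- `h∨_τ = τ₀² e∨_τ(ϑ)`. -/
def hvee (τ : V × ℤ → R) : R := D.tauZero τ ^ 2 * D.etau τ D.hshort

/-- `θ(μ) = #{b ∈ R(w_μ) : b(μ) = -2}`. -/
def theta (wmin : V → Equiv.Perm V) (μ : V) : ℕ :=
  {b : V × ℤ | b ∈ D.RW c (wmin μ) ∧ aval c b μ = -2}.ncard

/-- The coefficient `c_{λ,η} = θ(λ-η) e∨_τ(η) (h∨_τ)^{-sign⟨λ,η∨⟩}`. -/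
def ccoef (τ : V × ℤ → R) (wmin : V → Equiv.Perm V) (lam η : V) : R :=
  (D.theta c wmin (lam - η) : R) * D.etau τ η *
    D.hvee τ ^ (-sgnZ ⟪lam, coroot η⟫)

/-- The coefficient `a_{λ,ν} = τ_{w_{w_λ(λ-ν)}} τ_{w_{w_λ(λ-ν)} w_λ} τ_{w_λ}⁻¹`. -/
def acoef (τ : V × ℤ → R) (wmin : V → Equiv.Perm V) (lam ν : V) : R :=
  D.tauw c τ (wmin ((wmin lam) (lam - ν))) *
    D.tauw c τ (wmin ((wmin lam) (lam - ν)) * wmin lam) *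
    (D.tauw c τ (wmin lam))⁻¹

/-- The coefficient `b_{λ,ν}`. -/
def bcoef (τ : V × ℤ → R) (wmin : V → Equiv.Perm V) (lam ν : V) : R :=
  if (wmin (lam - ν)) (lam - ν) = (wmin lam) lam then
    D.tauw c τ (wmin ((wmin lam) (lam - ν))) ^ 2 *
      (if D.IsAffNeg (ν, ⌊(1 - ⟪lam, coroot ν⟫) / c⌋) then 1 else 0)
  else D.ccoef c τ wmin ((wmin lam) lam) (linPart (wmin lam) ν)

/-- The intertwining operator `(𝒥f)(λ) = τ_{w_λ}⁻¹ (I_{w_λ} f)(λ₊)`, where `Iw` assigns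
to each `w_λ` the composite of integral-reflection operators along a reduced word. -/
def Jcal (τ : V × ℤ → R) (wmin : V → Equiv.Perm V)
    (Iw : Equiv.Perm V → (V → R) → V → R) (f : V → R) (x : V) : R :=
  (D.tauw c τ (wmin x))⁻¹ * Iw (wmin x) f ((wmin x) x)

end Ops

/-- The Yang–Yang type Morse function `𝒱_μ`. -/
def morse (t : V → ℝ) (μ ξ : V) : ℝ :=
  (c / 2) * ⟪ξ, ξ⟫ - 2 * Real.pi * ⟪D.rhoVee + μ, ξ⟫ +
    ∑ α ∈ D.pos, (2 / ⟪α, α⟫) * ∫ x in (0:ℝ)..(⟪ξ, α⟫), mvfun (t α) x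

/-- The critical equation `cξ + ∑_{α>0} v_α(⟨ξ,α⟩) α∨ = 2π(ρ∨+μ)`. -/
def criticalEq (t : V → ℝ) (μ ξ : V) : Prop :=
  c • ξ + ∑ α ∈ D.pos, mvfun (t α) ⟪ξ, α⟫ • coroot α
    = (2 * Real.pi) • (D.rhoVee + μ)

/-- The Hessian bilinear form `H_{η,ζ}(ξ)`. -/
def hessForm (t : V → ℝ) (ξ η ζ : V) : ℝ :=
  c * ⟪η, ζ⟫ + ∑ α ∈ D.R0,
    (1 - t α ^ 2) * ⟪η, α⟫ * ⟪ζ, α⟫ /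
      (⟪α, α⟫ * (1 - 2 * t α * Real.cos ⟪ξ, α⟫ + t α ^ 2))

/-- `κ_± = (2/n) ∑_{α>0} (1-t_α²)/(1 ± |t_α|)²`; here `s = ±1`. -/
def kappaPM (t : V → ℝ) (s : ℝ) : ℝ :=
  (2 / (D.n : ℝ)) * ∑ α ∈ D.pos, (1 - t α ^ 2) / (1 + s * |t α|) ^ 2

end RootSystemData

/-!
Since `v(x; t) = x + 2 arctan (t sin x / (1 - t cos x))`, the function `v` is jointly real-analytic
on `(-1, 1) × ℝ` and increasing in `x`. Hence the critical map
`ξ ↦ cξ + ∑_{α > 0} v(⟨ξ, α⟩; t) α∨`, whose value at the minimum `ξ_μ(t)` is `2π(ρ∨ + μ)`, is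
strongly monotone with modulus `c`. Its differential is therefore invertible (Lax–Milgram), and the
implicit function theorem makes `ξ_μ` analytic. Strong monotonicity also bounds the distance from
`ξ_μ(t)` to any point `y` by `c⁻¹` times the error of `y` in the critical equation, so that limits
of `ξ_μ` can be read off from pointwise limits of the critical map.

At `t = 0` the critical map is `c` plus the operator `x ↦ ∑_{α > 0} ⟨x, α⟩ α∨`, which commutes with
the reflections and so is a scalar by irreducibility. Evaluating it at `ϑ`, for which
`⟨ϑ, α∨⟩ ∈ {0, 1}` when `α ≠ ϑ` is positive, shows that the scalar is the Coxeter number.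

As `t → 1⁻`, `v(x; t) → π` for `0 < x < 2π`, so on the open alcove `0 < ⟨y, α⟩ < 2π` the critical
map tends to `y ↦ cy + 2πρ∨`. The convergence fails on the walls, where `2πc⁻¹μ` may lie, but this
point is in the closure of the alcove and the distance bound extends by approximation.
-/

section PoissonKernel

open Set Filter Topology Real
open scoped ContDiff

variable {t : ℝ}

lemma one_sub_mul_cos_pos (ht : t ∈ Ioo (-1 : ℝ) 1) (x : ℝ) : 0 < 1 - t * cos x := by
  have h : |t * cos x| < 1 := by
    rw [abs_mul]
    exact (mul_le_of_le_one_right (abs_nonneg t) (abs_cos_le_one x)).trans_lt (abs_lt.2 ht)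
  linarith [(abs_lt.1 h).2]

lemma one_sub_two_mul_cos_add_sq_eq (t x : ℝ) :
    1 - 2 * t * cos x + t ^ 2 = (1 - t * cos x) ^ 2 + (t * sin x) ^ 2 := by
  linear_combination -t ^ 2 * sin_sq_add_cos_sq x

lemma one_sub_two_mul_cos_add_sq_pos (ht : t ∈ Ioo (-1 : ℝ) 1) (x : ℝ) :
    0 < 1 - 2 * t * cos x + t ^ 2 := by
  have := one_sub_mul_cos_pos ht x
  rw [one_sub_two_mul_cos_add_sq_eq]
  positivity

lemma hasDerivAt_mul_sin_div_one_sub_mul_cos {x : ℝ} (h : 1 - t * cos x ≠ 0) :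
    HasDerivAt (fun x ↦ t * sin x / (1 - t * cos x))
      ((t * cos x - t ^ 2) / (1 - t * cos x) ^ 2) x := by
  have hden : HasDerivAt (fun x ↦ 1 - t * cos x) (t * sin x) x := by
    simpa using ((hasDerivAt_cos x).const_mul t).const_sub 1
  convert! ((hasDerivAt_sin x).const_mul t).div hden h using 2
  linear_combination t ^ 2 * sin_sq_add_cos_sq x

lemma hasDerivAt_add_two_mul_arctan (ht : t ∈ Ioo (-1 : ℝ) 1) (x : ℝ) :
    HasDerivAt (fun x ↦ x + 2 * arctan (t * sin x / (1 - t * cos x)))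
      ((1 - t ^ 2) * (1 / (1 - 2 * t * cos x + t ^ 2))) x := by
  have hA := (one_sub_mul_cos_pos ht x).ne'
  have hN := (one_sub_two_mul_cos_add_sq_pos ht x).ne'
  have hsq : 1 + (t * sin x / (1 - t * cos x)) ^ 2 =
      (1 - 2 * t * cos x + t ^ 2) / (1 - t * cos x) ^ 2 := by
    rw [one_sub_two_mul_cos_add_sq_eq, div_pow, add_div, div_self (pow_ne_zero 2 hA)]
  convert! (hasDerivAt_id x).add
    ((hasDerivAt_mul_sin_div_one_sub_mul_cos hA).arctan.const_mul 2) using 1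
  calc (1 - t ^ 2) * (1 / (1 - 2 * t * cos x + t ^ 2))
      = 1 + 2 * ((t * cos x - t ^ 2) / (1 - 2 * t * cos x + t ^ 2)) := by
        rw [mul_one_div, mul_div_assoc', one_add_div hN]; ring
    _ = _ := by rw [hsq, one_div_div, div_mul_div_cancel₀' (pow_ne_zero 2 hA)]

lemma mvfun_eq_add_two_mul_arctan (ht : t ∈ Ioo (-1 : ℝ) 1) (x : ℝ) :
    mvfun t x = x + 2 * arctan (t * sin x / (1 - t * cos x)) := by
  have hcont : Continuous fun y ↦ (1 - t ^ 2) * (1 / (1 - 2 * t * cos y + t ^ 2)) :=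
    continuous_const.mul <| continuous_const.div (by fun_prop)
      fun y ↦ (one_sub_two_mul_cos_add_sq_pos ht y).ne'
  rw [mvfun, ← intervalIntegral.integral_const_mul,
    intervalIntegral.integral_eq_sub_of_hasDerivAt
      (fun y _ ↦ hasDerivAt_add_two_mul_arctan ht y) (hcont.intervalIntegrable _ _)]
  simp

lemma hasDerivAt_mvfun (ht : t ∈ Ioo (-1 : ℝ) 1) (x : ℝ) :
    HasDerivAt (mvfun t) ((1 - t ^ 2) * (1 / (1 - 2 * t * cos x + t ^ 2))) x := by
  simpa only [← mvfun_eq_add_two_mul_arctan ht] using hasDerivAt_add_two_mul_arctan ht x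

lemma monotone_mvfun (ht : t ∈ Ioo (-1 : ℝ) 1) : Monotone (mvfun t) := by
  refine monotone_of_hasDerivAt_nonneg (hasDerivAt_mvfun ht) fun x ↦ ?_
  have hN := one_sub_two_mul_cos_add_sq_pos ht x
  have hnum : 0 ≤ 1 - t ^ 2 := by nlinarith [ht.1, ht.2]
  exact mul_nonneg hnum (one_div_nonneg.2 hN.le)

lemma hasDerivAt_integral_mvfun (ht : t ∈ Ioo (-1 : ℝ) 1) (x : ℝ) :
    HasDerivAt (fun x ↦ ∫ y in (0 : ℝ)..x, mvfun t y) (mvfun t x) x := by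
  have hcont : Continuous (mvfun t) :=
    continuous_iff_continuousAt.2 fun x ↦ (hasDerivAt_mvfun ht x).continuousAt
  exact hcont.integral_hasStrictDerivAt 0 x |>.hasDerivAt

lemma contDiffAt_mvfun {n : ℕ∞ω} (ht : t ∈ Ioo (-1 : ℝ) 1) (x : ℝ) :
    ContDiffAt ℝ n (fun p : ℝ × ℝ ↦ mvfun p.1 p.2) (t, x) := by
  have hclosed : ContDiffAt ℝ n
      (fun p : ℝ × ℝ ↦ p.2 + 2 * arctan (p.1 * sin p.2 / (1 - p.1 * cos p.2))) (t, x) := by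
    refine contDiffAt_snd.add (contDiffAt_const.mul (contDiff_arctan.contDiffAt.comp _ ?_))
    exact (contDiffAt_fst.mul contDiffAt_snd.sin).div
      (contDiffAt_const.sub (contDiffAt_fst.mul contDiffAt_snd.cos)) (one_sub_mul_cos_pos ht x).ne'
  refine hclosed.congr_of_eventuallyEq ?_
  filter_upwards [continuousAt_fst.eventually (isOpen_Ioo.mem_nhds ht)] with p hp
  exact mvfun_eq_add_two_mul_arctan hp p.2

lemma mvfun_zero_left (x : ℝ) : mvfun 0 x = x := by
  simp [mvfun]

lemma tendsto_mvfun_zero (x : ℝ) : Tendsto (fun t ↦ mvfun t x) (𝓝 0) (𝓝 x) := by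
  have h : ContinuousAt (fun p : ℝ × ℝ ↦ mvfun p.1 p.2) (0, x) :=
    (contDiffAt_mvfun (n := 0) (by norm_num) x).continuousAt
  have := h.tendsto.comp (Continuous.prodMk_left x).continuousAt
  simpa [Function.comp_def, mvfun_zero_left] using this

lemma sin_div_one_sub_cos_eq_tan {x : ℝ} (hx : x ∈ Ioo 0 (2 * π)) :
    sin x / (1 - cos x) = tan (π / 2 - x / 2) := by
  have hs : 0 < sin (x / 2) :=
    sin_pos_of_pos_of_lt_pi (by linarith [hx.1]) (by linarith [hx.2])
  have hcos : 1 - cos x = 2 * sin (x / 2) ^ 2 := by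
    rw [sin_sq_eq_half_sub, mul_div_cancel₀ x two_ne_zero]; ring
  have hsin : sin x = 2 * sin (x / 2) * cos (x / 2) := by
    rw [← sin_two_mul, mul_div_cancel₀ x two_ne_zero]
  rw [tan_pi_div_two_sub, tan_eq_sin_div_cos, inv_div, hcos, hsin]
  field_simp

lemma tendsto_mvfun_one {x : ℝ} (hx : x ∈ Ioo 0 (2 * π)) :
    Tendsto (fun t ↦ mvfun t x) (𝓝[Ioo (-1) 1] 1) (𝓝 π) := by
  have hne : 1 - 1 * cos x ≠ 0 := by
    rw [one_mul, sub_ne_zero, ne_comm, Ne, cos_eq_one_iff_of_lt_of_lt]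
    · exact hx.1.ne'
    · linarith [hx.1, pi_pos]
    · exact hx.2
  have hclosed : ContinuousAt
      (fun t ↦ x + 2 * arctan (t * sin x / (1 - t * cos x))) 1 := by
    fun_prop (disch := exact hne)
  have hval : x + 2 * arctan (1 * sin x / (1 - 1 * cos x)) = π := by
    rw [one_mul, one_mul, sin_div_one_sub_cos_eq_tan hx,
      arctan_tan (by linarith [hx.2]) (by linarith [hx.1])]
    ring
  have hlim := hclosed.tendsto.mono_left (nhdsWithin_le_nhds (s := Ioo (-1) 1))
  rw [hval] at hlim
  refine hlim.congr' ?_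
  filter_upwards [self_mem_nhdsWithin] with t ht
  exact (mvfun_eq_add_two_mul_arctan ht x).symm

end PoissonKernel

section StronglyMonotone

open Set Filter Topology
open scoped ContDiff

variable {V : Type*} [NormedAddCommGroup V] [InnerProductSpace ℝ V]

/-- Strong monotonicity, with modulus `c`, of an operator on an inner product space; for the
gradient of a function this says that the function is `c`-strongly convex. -/
def StronglyMonotoneWith (c : ℝ) (F : V → V) : Prop :=
  ∀ x y, c * ‖x - y‖ ^ 2 ≤ ⟪F x - F y, x - y⟫

namespace StronglyMonotoneWith

variable {c : ℝ}

lemma mul_norm_sub_le {F : V → V} (hF : StronglyMonotoneWith c F) (x y : V) :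
    c * ‖x - y‖ ≤ ‖F x - F y‖ := by
  rcases (norm_nonneg (x - y)).eq_or_lt with h | h
  · rw [← h, mul_zero]
    exact norm_nonneg _
  · refine le_of_mul_le_mul_right ?_ h
    calc c * ‖x - y‖ * ‖x - y‖ = c * ‖x - y‖ ^ 2 := by ring
      _ ≤ ⟪F x - F y, x - y⟫ := hF x y
      _ ≤ ‖F x - F y‖ * ‖x - y‖ := real_inner_le_norm _ _

lemma injective {F : V → V} (hc : 0 < c) (hF : StronglyMonotoneWith c F) :
    Function.Injective F := by
  intro x y h
  have := hF.mul_norm_sub_le x y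
  rw [h, sub_self, norm_zero] at this
  exact sub_eq_zero.1 (norm_le_zero_iff.1 (nonpos_of_mul_nonpos_right this hc))

lemma mul_sq_norm_le_inner_fderiv {F : V → V} {A : V →L[ℝ] V} {x : V}
    (hF : StronglyMonotoneWith c F) (hA : HasFDerivAt F A x) (v : V) :
    c * ‖v‖ ^ 2 ≤ ⟪A v, v⟫ := by
  have hslope : Tendsto (fun s : ℝ ↦ ⟪s⁻¹ • (F (x + s • v) - F x), v⟫) (𝓝[>] 0) (𝓝 ⟪A v, v⟫) :=
    ((hA.hasLineDerivAt v).tendsto_slope_zero_right).inner tendsto_const_nhds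
  refine ge_of_tendsto hslope ?_
  filter_upwards [self_mem_nhdsWithin] with s (hs : 0 < s)
  have h := hF (x + s • v) x
  rw [add_sub_cancel_left, norm_smul, mul_pow, Real.norm_eq_abs, sq_abs,
    real_inner_smul_right] at h
  rw [real_inner_smul_left, inv_mul_eq_div, le_div_iff₀ hs]
  refine le_of_mul_le_mul_left ?_ hs
  linarith

lemma isInvertible_fderiv [CompleteSpace V] {F : V → V} {A : V →L[ℝ] V} {x : V} (hc : 0 < c)
    (hF : StronglyMonotoneWith c F) (hA : HasFDerivAt F A x) : A.IsInvertible := by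
  have hcoercive : IsCoercive (innerSL ℝ ∘L A) := by
    refine ⟨c, hc, fun v ↦ ?_⟩
    change c * ‖v‖ * ‖v‖ ≤ ⟪A v, v⟫
    rw [mul_assoc, ← sq]
    exact hF.mul_sq_norm_le_inner_fderiv hA v
  refine ⟨hcoercive.continuousLinearEquivOfBilin, ContinuousLinearMap.ext fun v ↦ ?_⟩
  exact ext_inner_right ℝ fun w ↦ hcoercive.continuousLinearEquivOfBilin_apply v w

lemma contDiffAt_of_apply_eq [CompleteSpace V] {E : Type*} [NormedAddCommGroup E]
    [NormedSpace ℝ E] [CompleteSpace E] {F : E → V → V} {x : E → V} {b : V} {p : E} {n : ℕ∞ω}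
    (hn : n ≠ 0) (hc : 0 < c) (hmono : ∀ᶠ q in 𝓝 p, StronglyMonotoneWith c (F q))
    (hF : ContDiffAt ℝ n (Function.uncurry F) (p, x p)) (hx : ∀ᶠ q in 𝓝 p, F q (x q) = b) :
    ContDiffAt ℝ n x p := by
  have hpartial : HasFDerivAt (F p)
      (fderiv ℝ (Function.uncurry F) (p, x p) ∘L .inr ℝ E V) (x p) :=
    (hF.differentiableAt hn).hasFDerivAt.comp (x p) (hasFDerivAt_prodMk_right p (x p))
  have hinv := hmono.self_of_nhds.isInvertible_fderiv hc hpartial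
  refine (hF.contDiffAt_implicitFunction hn hinv).congr_of_eventuallyEq ?_
  filter_upwards [hF.eventually_apply_implicitFunction hn hinv, hmono, hx] with q himp hq hxq
  exact hq.injective hc (hxq.trans (himp.trans hx.self_of_nhds).symm)

/-- The pointwise limit `G` of the operators `F i` is only needed on a set `S` having `x₀` in its
closure: for `x₀` on the boundary of the domain of convergence, `S` is the interior. -/
lemma tendsto_of_apply_eq {ι : Type*} {l : Filter ι} {F : ι → V → V} {x : ι → V} {G : V → V}
    {S : Set V} {x₀ b : V} (hc : 0 < c) (hmono : ∀ᶠ i in l, StronglyMonotoneWith c (F i))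
    (hx : ∀ᶠ i in l, F i (x i) = b) (hFG : ∀ y ∈ S, Tendsto (fun i ↦ F i y) l (𝓝 (G y)))
    (hx₀ : x₀ ∈ closure S) (hG : Tendsto G (𝓝[S] x₀) (𝓝 b)) : Tendsto x l (𝓝 x₀) := by
  rw [Metric.tendsto_nhds]
  intro ε hε
  have : (𝓝[S] x₀).NeBot := mem_closure_iff_nhdsWithin_neBot.1 hx₀
  obtain ⟨y, hyb, hyx₀, hyS⟩ : ∃ y, dist (G y) b < c * (ε / 4) ∧ dist y x₀ < ε / 2 ∧ y ∈ S :=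
    ((Metric.tendsto_nhds.1 hG _ (by positivity)).and
      ((eventually_nhdsWithin_of_eventually_nhds (Metric.ball_mem_nhds x₀ (half_pos hε))).and
        self_mem_nhdsWithin)).exists
  filter_upwards [hmono, hx, Metric.tendsto_nhds.1 (hFG y hyS) (c * (ε / 4)) (by positivity)]
    with i hFi hxi hyi
  have hxy : c * dist (x i) y < c * (ε / 2) :=
    calc c * dist (x i) y ≤ dist (F i y) b := by
          rw [dist_comm, dist_eq_norm, dist_eq_norm, ← hxi]
          exact hFi.mul_norm_sub_le y (x i)
      _ ≤ dist (F i y) (G y) + dist (G y) b := dist_triangle _ _ _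
      _ < c * (ε / 2) := by linarith
  linarith [dist_triangle (x i) y x₀, lt_of_mul_lt_mul_left hxy hc.le]

end StronglyMonotoneWith

end StronglyMonotone

section Coroot

open Submodule Set

variable {V : Type*} [NormedAddCommGroup V] [InnerProductSpace ℝ V]

lemma inner_coroot (x α : V) : ⟪x, coroot α⟫ = 2 / ⟪α, α⟫ * ⟪x, α⟫ :=
  real_inner_smul_right _ _ _

lemma inner_coroot_left (α x : V) : ⟪coroot α, x⟫ = 2 / ⟪α, α⟫ * ⟪x, α⟫ := by
  rw [real_inner_comm, inner_coroot]

lemma inner_coroot_eq_zero_iff {x α : V} (hα : α ≠ 0) : ⟪x, coroot α⟫ = 0 ↔ ⟪x, α⟫ = 0 := by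
  rw [inner_coroot, mul_eq_zero_iff_left (div_ne_zero two_ne_zero (inner_self_ne_zero.2 hα))]

lemma inner_self_coroot {α : V} (hα : α ≠ 0) : ⟪α, coroot α⟫ = 2 := by
  rw [inner_coroot, div_mul_cancel₀ _ (inner_self_ne_zero.2 hα)]

lemma inner_coroot_nonneg {x α : V} (h : 0 ≤ ⟪x, α⟫) : 0 ≤ ⟪x, coroot α⟫ := by
  rw [inner_coroot]
  exact mul_nonneg (div_nonneg zero_le_two real_inner_self_nonneg) h

lemma inner_smul_coroot_comm (x α y : V) :
    ⟪⟪x, α⟫ • coroot α, y⟫ = ⟪x, ⟪y, α⟫ • coroot α⟫ := by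
  rw [real_inner_smul_left, real_inner_smul_right, inner_coroot_left, inner_coroot]
  ring

lemma coroot_neg (α : V) : coroot (-α) = -coroot α := by
  rw [coroot, coroot, inner_neg_neg, smul_neg]

lemma coroot_map_linearIsometryEquiv (f : V ≃ₗᵢ[ℝ] V) (α : V) : coroot (f α) = f (coroot α) := by
  rw [coroot, coroot, f.inner_map_map, map_smul]

lemma reflection_orthogonal_singleton_apply (α x : V) :
    (ℝ ∙ α)ᗮ.reflection x = x - ⟪x, coroot α⟫ • α := by
  rw [reflection_orthogonal_apply, reflection_singleton_apply, inner_coroot, neg_sub, two_smul,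
    ← add_smul, RCLike.ofReal_real_eq_id, id, ← real_inner_self_eq_norm_sq, real_inner_comm]
  congr 2
  ring

lemma mem_closure_setOf_inner_mem_Ioo {A : Finset V} {a b : ℝ} {x p : V}
    (hx : ∀ α ∈ A, ⟪x, α⟫ ∈ Icc a b) (hp : ∀ α ∈ A, ⟪p, α⟫ ∈ Ioo a b) :
    x ∈ closure {y | ∀ α ∈ A, ⟪y, α⟫ ∈ Ioo a b} := by
  refine closure_mono ?_ (segment_subset_closure_openSegment (left_mem_segment ℝ x p))
  rintro _ ⟨r, s, hr, hs, hrs, rfl⟩ α hα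
  have hIcc : ⟪x, α⟫ ∈ closure (Icc a b) := subset_closure (hx α hα)
  have hIoo : ⟪p, α⟫ ∈ interior (Icc a b) := by rw [interior_Icc]; exact hp α hα
  have h := (convex_Icc a b).combo_closure_interior_mem_interior hIcc hIoo hr.le hs hrs
  rw [interior_Icc] at h
  rw [inner_add_left, real_inner_smul_left, real_inner_smul_left]
  exact h

end Coroot

namespace RootSystemData

open Submodule

variable {V : Type*} [NormedAddCommGroup V] [InnerProductSpace ℝ V] (D : RootSystemData V)

lemma finiteDimensional (D : RootSystemData V) : FiniteDimensional ℝ V :=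
  FiniteDimensional.of_finrank_pos (D.rank_eq ▸ D.n_pos)

lemma ne_zero_of_mem_pos {α : V} (hα : α ∈ D.pos) : α ≠ 0 :=
  D.ne_zero α (D.pos_subset hα)

lemma hshort_mem_R0 : D.hshort ∈ D.R0 :=
  D.pos_subset D.hshort_mem

lemma reflection_mem_R0 {α β : V} (hα : α ∈ D.R0) (hβ : β ∈ D.R0) :
    (ℝ ∙ α)ᗮ.reflection β ∈ D.R0 := by
  rw [reflection_orthogonal_singleton_apply]
  exact D.reflect_mem α hα β hβ

lemma neg_mem_R0 {α : V} (hα : α ∈ D.R0) : -α ∈ D.R0 := by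
  rw [← reflection_orthogonalComplement_singleton_eq_neg (𝕜 := ℝ)]
  exact D.reflection_mem_R0 hα hα

lemma sum_R0_eq_two_nsmul_sum_pos {M : Type*} [AddCommMonoid M] {f : V → M}
    (hf : ∀ α, f (-α) = f α) : ∑ α ∈ D.R0, f α = 2 • ∑ α ∈ D.pos, f α := by
  have hR0 : D.R0 = D.pos ∪ D.pos.image Neg.neg := by
    ext α
    simp only [Finset.mem_union, Finset.mem_image]
    constructor
    · exact fun hα ↦ (D.pos_or_neg α hα).imp id fun h ↦ ⟨-α, h, neg_neg α⟩
    · rintro (hα | ⟨β, hβ, rfl⟩)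
      · exact D.pos_subset hα
      · exact D.neg_mem_R0 (D.pos_subset hβ)
  have hdisj : Disjoint D.pos (D.pos.image Neg.neg) := by
    rw [Finset.disjoint_left]
    rintro _ hα h
    obtain ⟨β, hβ, rfl⟩ := Finset.mem_image.1 h
    exact D.pos_not_both β hβ hα
  rw [hR0, Finset.sum_union hdisj, Finset.sum_image neg_injective.injOn]
  simp only [hf, two_nsmul]

lemma top_le_span_simpleRoot : ⊤ ≤ span ℝ (Set.range D.simpleRoot) := by
  have hpos : ∀ α ∈ D.pos, α ∈ span ℝ (Set.range D.simpleRoot) := by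
    intro α hα
    obtain ⟨k, rfl⟩ := D.pos_natCombo α hα
    exact sum_mem fun j _ ↦ smul_mem _ _ (subset_span ⟨j, rfl⟩)
  rw [← D.span_top, span_le]
  intro α hα
  rcases D.pos_or_neg α hα with h | h
  · exact hpos α h
  · exact neg_mem_iff.1 (hpos _ h)

lemma linearIndependent_simpleRoot : LinearIndependent ℝ D.simpleRoot := by
  have := D.finiteDimensional
  exact linearIndependent_of_top_le_span_of_card_eq_finrank D.top_le_span_simpleRoot
    (by rw [Fintype.card_fin, D.rank_eq])

lemma exists_inner_simpleRoot_eq_one : ∃ p : V, ∀ j, ⟪p, D.simpleRoot j⟫ = 1 := by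
  have := D.finiteDimensional
  let b := Module.Basis.mk D.linearIndependent_simpleRoot D.top_le_span_simpleRoot
  let height := (b.constr ℝ fun _ ↦ (1 : ℝ)).toContinuousLinearMap
  refine ⟨(InnerProductSpace.toDual ℝ V).symm height, fun j ↦ ?_⟩
  rw [InnerProductSpace.toDual_symm_apply]
  calc height (D.simpleRoot j) = b.constr ℝ (fun _ ↦ (1 : ℝ)) (b j) := by
        rw [Module.Basis.mk_apply]; rfl
    _ = 1 := b.constr_basis ℝ _ j

lemma exists_forall_inner_pos : ∃ p : V, ∀ α ∈ D.pos, 0 < ⟪p, α⟫ := by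
  obtain ⟨p, hp⟩ := D.exists_inner_simpleRoot_eq_one
  refine ⟨p, fun α hα ↦ ?_⟩
  obtain ⟨k, hk⟩ := D.pos_natCombo α hα
  obtain ⟨j, hj⟩ : ∃ j, k j ≠ 0 := by
    by_contra! h
    exact D.ne_zero_of_mem_pos hα (by simpa [h] using hk)
  rw [hk, inner_sum]
  simp only [real_inner_smul_right, hp, mul_one]
  exact Finset.sum_pos' (fun _ _ ↦ Nat.cast_nonneg _) ⟨j, Finset.mem_univ j, by positivity⟩

lemma exists_forall_inner_mem_Ioo {r : ℝ} (hr : 0 < r) :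
    ∃ p : V, ∀ α ∈ D.pos, ⟪p, α⟫ ∈ Set.Ioo 0 r := by
  obtain ⟨p, hp⟩ := D.exists_forall_inner_pos
  have hsum : 0 < ∑ α ∈ D.pos, ⟪p, α⟫ + 1 :=
    add_pos_of_nonneg_of_pos (Finset.sum_nonneg fun α hα ↦ (hp α hα).le) one_pos
  refine ⟨(r / (∑ α ∈ D.pos, ⟪p, α⟫ + 1)) • p, fun α hα ↦ ?_⟩
  have hle : ⟪p, α⟫ ≤ ∑ α ∈ D.pos, ⟪p, α⟫ :=
    Finset.single_le_sum (f := fun α ↦ ⟪p, α⟫) (fun α hα ↦ (hp α hα).le) hα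
  rw [real_inner_smul_left]
  refine ⟨mul_pos (div_pos hr hsum) (hp α hα), ?_⟩
  rw [div_mul_eq_mul_div, div_lt_iff₀ hsum]
  exact mul_lt_mul_of_pos_left (hle.trans_lt (lt_add_one _)) hr

lemma inner_hshort_nonneg {α : V} (hα : α ∈ D.pos) : 0 ≤ ⟪D.hshort, α⟫ := by
  obtain ⟨p, hp⟩ := D.exists_forall_inner_pos
  -- The reflected root `s_α ϑ = ϑ - ⟨ϑ, α∨⟩ α` is short, hence lies below `ϑ`.
  obtain ⟨k, hk⟩ := D.hshort_highest _ (D.reflection_mem_R0 (D.pos_subset hα) D.hshort_mem_R0)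
    (LinearIsometryEquiv.norm_map _ _)
  rw [reflection_orthogonal_singleton_apply, sub_sub_cancel] at hk
  have hcomb : 0 ≤ ⟪p, ⟪D.hshort, coroot α⟫ • α⟫ := by
    rw [hk, inner_sum]
    refine Finset.sum_nonneg fun j _ ↦ ?_
    rw [real_inner_smul_right]
    exact mul_nonneg (Nat.cast_nonneg _) (hp _ (D.simpleRoot_mem j)).le
  rw [real_inner_smul_right] at hcomb
  have hpair := nonneg_of_mul_nonneg_left hcomb (hp α hα)
  rw [inner_coroot] at hpair
  exact nonneg_of_mul_nonneg_right hpair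
    (div_pos two_pos (real_inner_self_pos.2 (D.ne_zero_of_mem_pos hα)))

lemma inner_hshort_coroot_lt_two {α : V} (hα : α ∈ D.R0) (hne : α ≠ D.hshort) :
    ⟪D.hshort, coroot α⟫ < 2 := by
  have hαα : 0 < ⟪α, α⟫ := real_inner_self_pos.2 (D.ne_zero α hα)
  have hshort : ⟪D.hshort, D.hshort⟫ ≤ ⟪α, α⟫ := by
    rw [real_inner_self_eq_norm_sq, real_inner_self_eq_norm_sq]
    exact pow_le_pow_left₀ (norm_nonneg _) (D.hshort_short α hα) 2
  have hsub : 0 < ⟪D.hshort - α, D.hshort - α⟫ :=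
    real_inner_self_pos.2 (sub_ne_zero.2 hne.symm)
  rw [real_inner_sub_sub_self] at hsub
  rw [inner_coroot, div_mul_eq_mul_div, div_lt_iff₀ hαα]
  linarith

lemma inner_hshort_coroot_eq_zero_or_one {α : V} (hα : α ∈ D.pos) (hne : α ≠ D.hshort) :
    ⟪D.hshort, coroot α⟫ = 0 ∨ ⟪D.hshort, coroot α⟫ = 1 := by
  have hlt := D.inner_hshort_coroot_lt_two (D.pos_subset hα) hne
  have hge := inner_coroot_nonneg (D.inner_hshort_nonneg hα)
  obtain ⟨k, hk⟩ := D.crystallographic α (D.pos_subset hα) _ D.hshort_mem_R0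
  rw [hk] at hlt hge ⊢
  norm_cast at hlt hge ⊢
  omega

/-- The Coxeter number `h(R₀) = ⟨ρ, ϑ∨⟩ + 1`. -/
def coxeterNumber : ℝ := ⟪D.rhoHalf, coroot D.hshort⟫ + 1

lemma two_mul_inner_rhoHalf (x : V) : 2 * ⟪D.rhoHalf, x⟫ = ∑ α ∈ D.pos, ⟪α, x⟫ := by
  rw [rhoHalf, real_inner_smul_left, sum_inner, mul_inv_cancel_left₀ two_ne_zero]

lemma coxeterNumber_pos : 0 < D.coxeterNumber := by
  have hrho : 0 ≤ 2 * ⟪D.rhoHalf, coroot D.hshort⟫ := by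
    rw [two_mul_inner_rhoHalf]
    refine Finset.sum_nonneg fun α hα ↦ inner_coroot_nonneg ?_
    rw [real_inner_comm]
    exact D.inner_hshort_nonneg hα
  rw [coxeterNumber]
  linarith

/-- The Casimir-type operator `x ↦ ∑_{α > 0} ⟨x, α⟩ α∨`, which is the linear part of the critical
equation at `t = 0`. -/
def casimir : V →ₗ[ℝ] V := ∑ α ∈ D.pos, (innerₗ V α).smulRight (coroot α)

lemma casimir_apply (x : V) : D.casimir x = ∑ α ∈ D.pos, ⟪x, α⟫ • coroot α := by
  simp only [casimir, LinearMap.sum_apply, LinearMap.smulRight_apply, innerₗ_apply_apply,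
    real_inner_comm x]

lemma isSymmetric_casimir : D.casimir.IsSymmetric := by
  intro x y
  simp only [casimir_apply, sum_inner, inner_sum, inner_smul_coroot_comm]

lemma two_smul_casimir_apply (x : V) :
    (2 : ℝ) • D.casimir x = ∑ α ∈ D.R0, ⟪x, α⟫ • coroot α := by
  rw [ofNat_smul_eq_nsmul, casimir_apply, D.sum_R0_eq_two_nsmul_sum_pos fun α ↦ by
    rw [coroot_neg, inner_neg_right, neg_smul_neg]]

lemma casimir_reflection {β : V} (hβ : β ∈ D.R0) (x : V) :
    D.casimir ((ℝ ∙ β)ᗮ.reflection x) = (ℝ ∙ β)ᗮ.reflection (D.casimir x) := by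
  set σ := (ℝ ∙ β)ᗮ.reflection
  have hσ : ∀ y, σ (σ y) = y := reflection_reflection _
  refine smul_right_injective V (two_ne_zero (α := ℝ)) ?_
  calc (2 : ℝ) • D.casimir (σ x)
      = ∑ α ∈ D.R0, ⟪σ x, α⟫ • coroot α := D.two_smul_casimir_apply _
    _ = ∑ α ∈ D.R0, ⟪σ x, σ α⟫ • coroot (σ α) :=
      (Finset.sum_nbij' σ σ (fun α hα ↦ D.reflection_mem_R0 hβ hα)
        (fun α hα ↦ D.reflection_mem_R0 hβ hα) (fun α _ ↦ hσ α) (fun α _ ↦ hσ α)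
        fun α _ ↦ by rw [hσ])
    _ = σ (∑ α ∈ D.R0, ⟪x, α⟫ • coroot α) := by
      simp only [map_sum, map_smul, σ.inner_map_map, coroot_map_linearIsometryEquiv]
    _ = (2 : ℝ) • σ (D.casimir x) := by rw [← two_smul_casimir_apply, map_smul]

lemma exists_casimir_root_eq_smul {β : V} (hβ : β ∈ D.R0) : ∃ l : ℝ, D.casimir β = l • β := by
  have hneg : (ℝ ∙ β)ᗮ.reflection (D.casimir β) = -D.casimir β := by
    rw [← D.casimir_reflection hβ, reflection_orthogonalComplement_singleton_eq_neg, map_neg]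
  rw [reflection_orthogonal_apply, neg_inj, reflection_eq_self_iff, mem_span_singleton] at hneg
  exact hneg.imp fun _ ↦ Eq.symm

/-- Schur's lemma for `R₀`: eigenvectors of a symmetric operator with distinct eigenvalues are
orthogonal, so by irreducibility all roots have the same eigenvalue. -/
lemma exists_eq_smul_of_isSymmetric {T : V →ₗ[ℝ] V} (hT : T.IsSymmetric)
    (hroot : ∀ β ∈ D.R0, ∃ l : ℝ, T β = l • β) : ∃ l : ℝ, T = l • LinearMap.id := by
  obtain ⟨l, hl⟩ := hroot _ D.hshort_mem_R0
  let S := D.R0.filter fun β ↦ T β = l • β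
  have hS : S = D.R0 := by
    have hshortS : D.hshort ∈ S := Finset.mem_filter.2 ⟨D.hshort_mem_R0, hl⟩
    refine (D.irreducible S (Finset.filter_subset _ _) fun α hα β hβ hβS ↦ ?_).resolve_left
      (Finset.ne_empty_of_mem hshortS)
    obtain ⟨m, hm⟩ := hroot β hβ
    by_contra hne
    have hsymm := hT α β
    rw [(Finset.mem_filter.1 hα).2, hm, real_inner_smul_left, real_inner_smul_right] at hsymm
    exact hβS (Finset.mem_filter.2 ⟨hβ, by rw [hm, mul_right_cancel₀ hne hsymm]⟩)
  exact ⟨l, LinearMap.ext_on D.span_top fun β hβ ↦ Finset.filter_eq_self.1 hS β hβ⟩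

lemma inner_casimir_hshort :
    ⟪D.casimir D.hshort, coroot D.hshort⟫ = 2 * D.coxeterNumber := by
  have hterm : ∀ α ∈ D.pos.erase D.hshort,
      ⟪D.hshort, coroot α⟫ * ⟪α, coroot D.hshort⟫ = ⟪α, coroot D.hshort⟫ := by
    intro α hα
    rcases D.inner_hshort_coroot_eq_zero_or_one (Finset.mem_of_mem_erase hα)
      (Finset.ne_of_mem_erase hα) with h | h
    · rw [inner_coroot_eq_zero_iff (D.ne_zero_of_mem_pos (Finset.mem_of_mem_erase hα)),
        real_inner_comm] at h
      rw [inner_coroot α, h, mul_zero, mul_zero]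
    · rw [h, one_mul]
  have hcoroot : ⟪D.hshort, coroot D.hshort⟫ = 2 :=
    inner_self_coroot (D.ne_zero_of_mem_pos D.hshort_mem)
  calc ⟪D.casimir D.hshort, coroot D.hshort⟫
      = ∑ α ∈ D.pos, ⟪D.hshort, coroot α⟫ * ⟪α, coroot D.hshort⟫ := by
        rw [casimir_apply, sum_inner]
        refine Finset.sum_congr rfl fun α _ ↦ ?_
        rw [inner_coroot D.hshort α, real_inner_smul_left, coroot, real_inner_smul_left]
        ring
    _ = 2 * 2 + ∑ α ∈ D.pos.erase D.hshort, ⟪α, coroot D.hshort⟫ := by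
        rw [← Finset.add_sum_erase _ _ D.hshort_mem, Finset.sum_congr rfl hterm, hcoroot]
    _ = 2 + ∑ α ∈ D.pos, ⟪α, coroot D.hshort⟫ := by
        rw [← Finset.add_sum_erase _ _ D.hshort_mem, hcoroot]
        ring
    _ = 2 * D.coxeterNumber := by rw [← two_mul_inner_rhoHalf, coxeterNumber]; ring

lemma casimir_eq_coxeterNumber_smul (x : V) : D.casimir x = D.coxeterNumber • x := by
  obtain ⟨l, hl⟩ := D.exists_eq_smul_of_isSymmetric D.isSymmetric_casimir
    fun _ ↦ D.exists_casimir_root_eq_smul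
  have hϑ := D.inner_casimir_hshort
  rw [hl, LinearMap.smul_apply, LinearMap.id_apply, real_inner_smul_left,
    inner_self_coroot (D.ne_zero_of_mem_pos D.hshort_mem), mul_comm l] at hϑ
  rw [hl, ← mul_left_cancel₀ two_ne_zero hϑ, LinearMap.smul_apply, LinearMap.id_apply]

end RootSystemData

namespace RootSystemData

open Filter Topology

variable {V : Type*} [NormedAddCommGroup V] [InnerProductSpace ℝ V] (D : RootSystemData V)

/-- The left-hand side `cξ + ∑_{α > 0} v_α(⟨ξ, α⟩) α∨` of the critical equation, as a map of `ξ`;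
the gradient of `𝒱_μ` is `criticalMap` minus the constant `2π(ρ∨ + μ)`. -/
def criticalMap (c : ℝ) (t : V → ℝ) (ξ : V) : V :=
  c • ξ + ∑ α ∈ D.pos, mvfun (t α) ⟪ξ, α⟫ • coroot α

section Parameter

variable {t : V → ℝ}

lemma hasFDerivAt_morse (ht : ∀ α ∈ D.pos, t α ∈ Set.Ioo (-1 : ℝ) 1) (c : ℝ) (μ ξ : V) :
    HasFDerivAt (D.morse c t μ)
      (innerSL ℝ (D.criticalMap c t ξ - (2 * Real.pi) • (D.rhoVee + μ))) ξ := by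
  have hquad : HasFDerivAt (fun ξ : V ↦ (c / 2) * ⟪ξ, ξ⟫) (innerSL ℝ (c • ξ)) ξ := by
    convert! ((hasFDerivAt_id ξ).inner ℝ (hasFDerivAt_id ξ)).const_mul (c / 2) using 1
    ext v
    simp only [map_smul, smul_apply, innerSL_apply_apply, smul_eq_mul,
      ContinuousLinearMap.comp_apply, ContinuousLinearMap.prod_apply, ContinuousLinearMap.id_apply,
      fderivInnerCLM_apply, id, real_inner_comm v]
    ring
  have hlin : HasFDerivAt (fun ξ : V ↦ 2 * Real.pi * ⟪D.rhoVee + μ, ξ⟫)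
      (innerSL ℝ ((2 * Real.pi) • (D.rhoVee + μ))) ξ := by
    rw [map_smul]
    exact (innerSL ℝ (D.rhoVee + μ)).hasFDerivAt.const_mul (2 * Real.pi)
  have hroot : ∀ α ∈ D.pos,
      HasFDerivAt (fun ξ : V ↦ (2 / ⟪α, α⟫) * ∫ x in (0 : ℝ)..⟪ξ, α⟫, mvfun (t α) x)
        (innerSL ℝ (mvfun (t α) ⟪ξ, α⟫ • coroot α)) ξ := by
    intro α hα
    have hinner : HasFDerivAt (fun ξ : V ↦ ⟪ξ, α⟫) (innerSL ℝ α) ξ := by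
      simp only [real_inner_comm α]
      exact (innerSL ℝ α).hasFDerivAt
    convert! ((hasDerivAt_integral_mvfun (ht α hα) _).comp_hasFDerivAt ξ hinner).const_mul
      (2 / ⟪α, α⟫) using 1
    rw [coroot, map_smul, map_smul, smul_comm]
  convert! (hquad.sub hlin).add (HasFDerivAt.fun_sum hroot) using 1
  rw [criticalMap, add_sub_right_comm, map_add, map_sub, map_sum]

lemma criticalEq_of_forall_morse_le (ht : ∀ α ∈ D.pos, t α ∈ Set.Ioo (-1 : ℝ) 1) {c : ℝ}
    {μ ξ : V} (hmin : ∀ ζ, D.morse c t μ ξ ≤ D.morse c t μ ζ) : D.criticalEq c t μ ξ := by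
  have hlocal : IsLocalMin (D.morse c t μ) ξ := Eventually.of_forall hmin
  have hzero := hlocal.hasFDerivAt_eq_zero (D.hasFDerivAt_morse ht c μ ξ)
  rw [← norm_eq_zero, innerSL_apply_norm, norm_eq_zero] at hzero
  exact sub_eq_zero.1 hzero

lemma stronglyMonotoneWith_criticalMap (ht : ∀ α ∈ D.pos, t α ∈ Set.Ioo (-1 : ℝ) 1) (c : ℝ) :
    StronglyMonotoneWith c (D.criticalMap c t) := by
  intro x y
  have hsum : 0 ≤ ∑ α ∈ D.pos,
      ⟪(mvfun (t α) ⟪x, α⟫ - mvfun (t α) ⟪y, α⟫) • coroot α, x - y⟫ := by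
    refine Finset.sum_nonneg fun α hα ↦ ?_
    have hmono := ((monotone_mvfun (ht α hα)).monovary monotone_id).sub_mul_sub_nonneg
      ⟪y, α⟫ ⟪x, α⟫
    rw [real_inner_smul_left, inner_coroot_left, inner_sub_left, mul_left_comm]
    exact mul_nonneg (div_nonneg zero_le_two real_inner_self_nonneg) hmono
  calc c * ‖x - y‖ ^ 2 = ⟪c • (x - y), x - y⟫ := by
        rw [real_inner_smul_left, real_inner_self_eq_norm_sq]
    _ ≤ ⟪c • (x - y), x - y⟫ + ∑ α ∈ D.pos,
        ⟪(mvfun (t α) ⟪x, α⟫ - mvfun (t α) ⟪y, α⟫) • coroot α, x - y⟫ :=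
      le_add_of_nonneg_right hsum
    _ = ⟪D.criticalMap c t x - D.criticalMap c t y, x - y⟫ := by
      rw [← sum_inner, ← inner_add_left, criticalMap, criticalMap, add_sub_add_comm, smul_sub,
        ← Finset.sum_sub_distrib]
      simp only [sub_smul]

end Parameter

section AnalyticDependence

open scoped ContDiff

variable {E : Type*} [NormedAddCommGroup E] [NormedSpace ℝ E] {t : E → V → ℝ}

lemma contDiffAt_criticalMap {n : ℕ∞ω} {p : E}
    (hmem : ∀ α ∈ D.pos, t p α ∈ Set.Ioo (-1 : ℝ) 1)
    (ht : ∀ α ∈ D.pos, ContDiffAt ℝ n (fun q ↦ t q α) p) (c : ℝ) (ξ : V) :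
    ContDiffAt ℝ n (Function.uncurry fun q ↦ D.criticalMap c (t q)) (p, ξ) := by
  refine (contDiffAt_snd.const_smul c).add (ContDiffAt.sum fun α hα ↦ ?_)
  have harg : ContDiffAt ℝ n (fun q : E × V ↦ (t q.1 α, ⟪q.2, α⟫)) (p, ξ) :=
    ((ht α hα).comp (p, ξ) contDiffAt_fst).prodMk (contDiffAt_snd.inner ℝ contDiffAt_const)
  have hv : ContDiffAt ℝ n (fun q : E × V ↦ mvfun (t q.1 α) ⟪q.2, α⟫) (p, ξ) :=
    ContDiffAt.comp (g := fun q : ℝ × ℝ ↦ mvfun q.1 q.2) (p, ξ)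
      (contDiffAt_mvfun (hmem α hα) ⟪ξ, α⟫) harg
  exact hv.smul contDiffAt_const

lemma analyticAt_of_criticalEq [CompleteSpace E] {c : ℝ} (hc : 0 < c) {x : E → V} {μ : V}
    {p : E}
    (hmem : ∀ᶠ q in 𝓝 p, ∀ α ∈ D.pos, t q α ∈ Set.Ioo (-1 : ℝ) 1)
    (ht : ∀ α ∈ D.pos, AnalyticAt ℝ (fun q ↦ t q α) p)
    (hx : ∀ᶠ q in 𝓝 p, D.criticalEq c (t q) μ (x q)) : AnalyticAt ℝ x p := by
  have := D.finiteDimensional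
  have : CompleteSpace V := FiniteDimensional.complete ℝ V
  have hcont : ContDiffAt ℝ ω (Function.uncurry fun q ↦ D.criticalMap c (t q)) (p, x p) :=
    D.contDiffAt_criticalMap hmem.self_of_nhds (fun α hα ↦ (ht α hα).contDiffAt) c (x p)
  have hmono : ∀ᶠ q in 𝓝 p, StronglyMonotoneWith c (D.criticalMap c (t q)) :=
    hmem.mono fun q hq ↦ D.stronglyMonotoneWith_criticalMap hq c
  exact (StronglyMonotoneWith.contDiffAt_of_apply_eq (by simp) hc hmono hcont hx).analyticAt

end AnalyticDependence

section Limits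

variable {ι : Type*} {l : Filter ι} {c : ℝ} {t : ι → V → ℝ} {x : ι → V} {μ : V}

lemma tendsto_criticalMap {f : ℝ → ℝ} {y : V}
    (h : ∀ α ∈ D.pos, Tendsto (fun i ↦ mvfun (t i α) ⟪y, α⟫) l (𝓝 (f ⟪y, α⟫))) :
    Tendsto (fun i ↦ D.criticalMap c (t i) y) l
      (𝓝 (c • y + ∑ α ∈ D.pos, f ⟪y, α⟫ • coroot α)) :=
  tendsto_const_nhds.add (tendsto_finsetSum _ fun α hα ↦ (h α hα).smul_const _)

lemma tendsto_of_criticalEq_of_tendsto_zero (hc : 0 < c)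
    (hmem : ∀ᶠ i in l, ∀ α ∈ D.pos, t i α ∈ Set.Ioo (-1 : ℝ) 1)
    (hx : ∀ᶠ i in l, D.criticalEq c (t i) μ (x i))
    (ht : ∀ α ∈ D.pos, Tendsto (fun i ↦ t i α) l (𝓝 0)) :
    Tendsto x l (𝓝 ((2 * Real.pi / (c + D.coxeterNumber)) • (D.rhoVee + μ))) := by
  refine StronglyMonotoneWith.tendsto_of_apply_eq (G := ((c + D.coxeterNumber) • ·))
    (S := Set.univ) hc (hmem.mono fun i hi ↦ D.stronglyMonotoneWith_criticalMap hi c) hx ?_ ?_ ?_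
  · intro y _
    have := D.tendsto_criticalMap (f := id)
      (fun α hα ↦ (tendsto_mvfun_zero ⟪y, α⟫).comp (ht α hα)) (c := c)
    simpa only [id, ← casimir_apply, casimir_eq_coxeterNumber_smul, ← add_smul] using this
  · rw [closure_univ]
    exact Set.mem_univ _
  · rw [nhdsWithin_univ]
    refine (continuous_const_smul (c + D.coxeterNumber)).tendsto' _ _ ?_
    rw [smul_smul, mul_div_cancel₀ _ (add_pos hc D.coxeterNumber_pos).ne']

lemma tendsto_of_criticalEq_of_tendsto_one (hc : 0 < c)
    (hmem : ∀ᶠ i in l, ∀ α ∈ D.pos, t i α ∈ Set.Ioo (-1 : ℝ) 1)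
    (hx : ∀ᶠ i in l, D.criticalEq c (t i) μ (x i))
    (ht : ∀ α ∈ D.pos, Tendsto (fun i ↦ t i α) l (𝓝 1))
    (hμ : ∀ α ∈ D.pos, ⟪μ, α⟫ ∈ Set.Icc 0 c) :
    Tendsto x l (𝓝 ((2 * Real.pi / c) • μ)) := by
  have hpos : 0 < 2 * Real.pi := Real.two_pi_pos
  obtain ⟨p, hp⟩ := D.exists_forall_inner_mem_Ioo hpos
  refine StronglyMonotoneWith.tendsto_of_apply_eq
    (G := fun y ↦ c • y + (2 * Real.pi) • D.rhoVee)
    (S := {y | ∀ α ∈ D.pos, ⟪y, α⟫ ∈ Set.Ioo 0 (2 * Real.pi)}) hc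
    (hmem.mono fun i hi ↦ D.stronglyMonotoneWith_criticalMap hi c) hx ?_ ?_ ?_
  · intro y hy
    have hlim := D.tendsto_criticalMap (f := fun _ ↦ Real.pi)
      (fun α hα ↦ (tendsto_mvfun_one (hy α hα)).comp
        (tendsto_nhdsWithin_iff.2 ⟨ht α hα, hmem.mono fun i hi ↦ hi α hα⟩)) (c := c)
    have hrho : ∑ α ∈ D.pos, Real.pi • coroot α = (2 * Real.pi) • D.rhoVee := by
      rw [rhoVee, smul_smul, ← Finset.smul_sum]
      congr 1
      ring
    rwa [hrho] at hlim
  · refine mem_closure_setOf_inner_mem_Ioo (fun α hα ↦ ?_) hp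
    rw [real_inner_smul_left, div_mul_eq_mul_div, mul_div_assoc]
    exact ⟨mul_nonneg hpos.le (div_nonneg (hμ α hα).1 hc.le),
      mul_le_of_le_one_right hpos.le (div_le_one_of_le₀ (hμ α hα).2 hc.le)⟩
  · have hG : Continuous fun y : V ↦ c • y + (2 * Real.pi) • D.rhoVee := by fun_prop
    refine tendsto_nhdsWithin_of_tendsto_nhds (hG.tendsto' _ _ ?_)
    rw [smul_smul, mul_div_cancel₀ _ hc.ne', ← smul_add, add_comm]

end Limits

end RootSystemData

theorem statement14_general {V E : Type*} [NormedAddCommGroup V] [InnerProductSpace ℝ V]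
    [NormedAddCommGroup E] [NormedSpace ℝ E] [CompleteSpace E]
    (D : RootSystemData V) {c : ℝ} (hc : 0 < c) (μ : V)
    {U : Set E} (hU : IsOpen U) {t : E → V → ℝ}
    (htmem : ∀ p ∈ U, ∀ α ∈ D.pos, t p α ∈ Set.Ioo (-1 : ℝ) 1)
    (htan : ∀ α ∈ D.pos, AnalyticOnNhd ℝ (fun p ↦ t p α) U)
    {x : E → V} (hx : ∀ p ∈ U, ∀ ζ, D.morse c (t p) μ (x p) ≤ D.morse c (t p) μ ζ) :
    AnalyticOnNhd ℝ x U ∧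
    (∀ l ≤ Filter.principal U, (∀ α ∈ D.pos, Filter.Tendsto (fun p ↦ t p α) l (nhds 0)) →
      Filter.Tendsto x l (nhds ((2 * Real.pi / (c + D.coxeterNumber)) • (D.rhoVee + μ)))) ∧
    ((∀ α ∈ D.pos, ⟪μ, α⟫ ∈ Set.Icc 0 c) →
      ∀ l ≤ Filter.principal U, (∀ α ∈ D.pos, Filter.Tendsto (fun p ↦ t p α) l (nhds 1)) →
        Filter.Tendsto x l (nhds ((2 * Real.pi / c) • μ))) := by
  have hcrit : ∀ p ∈ U, D.criticalEq c (t p) μ (x p) := fun p hp ↦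
    D.criticalEq_of_forall_morse_le (htmem p hp) (hx p hp)
  refine ⟨fun p hp ↦ ?_, fun l hl hlim ↦ ?_, fun hμ l hl hlim ↦ ?_⟩
  · have hUp := hU.mem_nhds hp
    exact D.analyticAt_of_criticalEq hc (Filter.eventually_of_mem hUp htmem)
      (fun α hα ↦ htan α hα p hp) (Filter.eventually_of_mem hUp hcrit)
  · have hUl := Filter.le_principal_iff.1 hl
    exact D.tendsto_of_criticalEq_of_tendsto_zero hc (Filter.eventually_of_mem hUl htmem)
      (Filter.eventually_of_mem hUl hcrit) hlim
  · have hUl := Filter.le_principal_iff.1 hl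
    exact D.tendsto_of_criticalEq_of_tendsto_one hc (Filter.eventually_of_mem hUl htmem)
      (Filter.eventually_of_mem hUl hcrit) hlim hμ

open RootSystemData in
/-- in the equal-parameter case, for `μ ∈ P_c^{∨,+}` the global minimum
`t ↦ ξ_μ(t)` of the Morse function is continuous (indeed real-analytic) on `(-1,1)`,
with `ξ_μ(t) → (2π/(c+h(R₀)))(ρ∨+μ)` as `t → 0` (where `h(R₀) = ⟨ρ,ϑ∨⟩+1` is the
Coxeter number) and `ξ_μ(t) → 2πc⁻¹μ` as `t → 1⁻`. -/
theorem statement14 {V : Type*} [NormedAddCommGroup V] [InnerProductSpace ℝ V]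
    (D : RootSystemData V) (c : ℝ) (hc : 0 < c)
    (μ : V) (hμ : μ ∈ D.coweightLattice)
    (hμdom : ∀ α ∈ D.pos, 0 ≤ ⟪μ, α⟫ ∧ ⟪μ, α⟫ ≤ c)
    (xi : ℝ → V)
    (hxi : ∀ t ∈ Set.Ioo (-1 : ℝ) 1, ∀ ζ : V,
      D.morse c (fun _ => t) μ (xi t) ≤ D.morse c (fun _ => t) μ ζ)
    (huniq : ∀ t ∈ Set.Ioo (-1 : ℝ) 1, ∀ ξ' : V,
      (∀ ζ : V, D.morse c (fun _ => t) μ ξ' ≤ D.morse c (fun _ => t) μ ζ) → ξ' = xi t) :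
    ContinuousOn xi (Set.Ioo (-1 : ℝ) 1) ∧
    AnalyticOnNhd ℝ xi (Set.Ioo (-1 : ℝ) 1) ∧
    Filter.Tendsto xi (nhdsWithin 0 (Set.Ioo (-1 : ℝ) 1))
      (nhds ((2 * Real.pi / (c + (⟪D.rhoHalf, coroot D.hshort⟫ + 1))) • (D.rhoVee + μ))) ∧
    Filter.Tendsto xi (nhdsWithin 1 (Set.Iio (1 : ℝ)))
      (nhds ((2 * Real.pi / c) • μ)) := by
  have hopen : IsOpen (Set.Ioo (-1 : ℝ) 1) := isOpen_Ioo
  obtain ⟨hanalytic, hzero, hone⟩ := statement14_general D hc μ hopen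
    (t := fun p _ ↦ p) (fun p hp _ _ ↦ hp) (fun _ _ ↦ analyticOnNhd_id) hxi
  refine ⟨hanalytic.continuousOn, hanalytic, ?_, ?_⟩
  · exact hzero _ inf_le_right fun _ _ ↦ Filter.tendsto_id'.2 nhdsWithin_le_nhds
  · exact hone hμdom _ (Filter.le_principal_iff.2 (Ioo_mem_nhdsLT (by norm_num)))
      fun _ _ ↦ Filter.tendsto_id'.2 nhdsWithin_le_nhds
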